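/- (Correctness of branching rule B2.) Let G=(V,A) be a finite loopless digraph, r ∈ V, T an out-tree of G rooted at r, and v₀ ∈ V(T) a vertex with out-degree 0 in T and out-degree 1 in G. Let v₀, v₁, …, v_k (k ≥ 1) be pairwise distinct vertices such that: N⁺(v₀) = {v₁}; for each i with 1 ≤ i ≤ k−1, N⁺(v_i) \ {v₀,…,v_{i−1}} = {v_{i+1}}; and v₁,…,v_k ∉ V(T). Assume moreover that for every i with 1 ≤ i ≤ k there exist an index z with 1 ≤ z ≤ i and a vertex q ∉ {v₀,…,v_k} with (q,v_z) ∈ A. Then for every spanning out-tree T' of G rooted at r with T' ⪰ T there exists a spanning out-tree T'' of G rooted at r with T'' ⪰ T such that |leaves(T'')| ≥ |leaves(T')| and either v₀ is a leaf of T'', or all of v₀, v₁, …, v_k are internal vertices of T''. -/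

import Mathlib

/-!
If some path vertex is a leaf of `T'`, let `v n` be the first one. As every arc out of `v i` leads
to `v (i + 1)` or back along the path, `T'` runs through `v 0, …, v n` and stops there, so that all
descendants of `v 1, …, v n` lie on the path. Now let `(q, v z)` be an arc entering the path from
outside, with `1 ≤ z ≤ n`. Since `q` is no descendant of `v z`, replacing the parent `v (z - 1)` of
`v z` by `q` yields another spanning out-tree: `v (z - 1)` becomes a leaf, and at most `q` ceases to
be one. The first leaf on the path has moved towards `v 0`; repeat until it is `v 0`.
-/

variable {V : Type*} [DecidableEq V] [Fintype V]

/-- The vertex set of an arc set `T` together with the root `r`. -/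
def dverts (r : V) (T : Finset (V × V)) : Finset V :=
  insert r (T.image Prod.fst ∪ T.image Prod.snd)

/-- In-degree of `v` in the arc set `T`. -/
def dInDeg (T : Finset (V × V)) (v : V) : ℕ :=
  (T.filter fun a => a.2 = v).card

/-- Out-degree of `v` in the arc set `T`. -/
def dOutDeg (T : Finset (V × V)) (v : V) : ℕ :=
  (T.filter fun a => a.1 = v).card

/-- Reachability by a directed path using only arcs of `T`. -/
def DReach (T : Finset (V × V)) (x y : V) : Prop :=
  Relation.ReflTransGen (fun a b => (a, b) ∈ T) x y

/-- A loopless arc set. -/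
def DLoopless (A : Finset (V × V)) : Prop := ∀ a ∈ A, a.1 ≠ a.2

/-- `T` is an out-tree of the digraph with arc set `A`, rooted at `r`. -/
def IsOutTree (A : Finset (V × V)) (r : V) (T : Finset (V × V)) : Prop :=
  T ⊆ A ∧ dInDeg T r = 0 ∧ (∀ v ∈ dverts r T, v ≠ r → dInDeg T v = 1) ∧
    ∀ v ∈ dverts r T, DReach T r v

/-- `T` is a spanning out-tree of the digraph with arc set `A`, rooted at `r`. -/
def IsSpanningOutTree (A : Finset (V × V)) (r : V) (T : Finset (V × V)) : Prop :=
  IsOutTree A r T ∧ dverts r T = Finset.univ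

/-- The leaves of an out-tree: vertices of out-degree 0. -/
def dleaves (r : V) (T : Finset (V × V)) : Finset V :=
  (dverts r T).filter fun v => dOutDeg T v = 0

section Arcs

omit [Fintype V]

variable {A T T' : Finset (V × V)} {r a b q u x y : V}

theorem fst_mem_dverts (h : (a, b) ∈ T) : a ∈ dverts r T :=
  Finset.mem_insert_of_mem (Finset.mem_union_left _ (Finset.mem_image_of_mem Prod.fst h))

theorem snd_mem_dverts (h : (a, b) ∈ T) : b ∈ dverts r T :=
  Finset.mem_insert_of_mem (Finset.mem_union_right _ (Finset.mem_image_of_mem Prod.snd h))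

theorem dOutDeg_eq_zero_iff : dOutDeg T x = 0 ↔ ∀ y, (x, y) ∉ T := by
  rw [dOutDeg, Finset.card_eq_zero, Finset.filter_eq_empty_iff]
  exact ⟨fun h _ hy ↦ h hy rfl, fun h ⟨_, y⟩ hy hx ↦ h y (hx ▸ hy)⟩

theorem dInDeg_eq_zero_iff : dInDeg T x = 0 ↔ ∀ u, (u, x) ∉ T := by
  rw [dInDeg, Finset.card_eq_zero, Finset.filter_eq_empty_iff]
  exact ⟨fun h _ hu ↦ h hu rfl, fun h ⟨u, _⟩ hu hx ↦ h u (hx ▸ hu)⟩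

theorem dInDeg_eq_one_iff : dInDeg T x = 1 ↔ ∃! u, (u, x) ∈ T := by
  simp only [dInDeg, Finset.card_eq_one_iff_existsUnique, Finset.mem_filter]
  constructor
  · rintro ⟨⟨u, _⟩, ⟨hu, rfl⟩, huniq⟩
    exact ⟨u, hu, fun w hw ↦ congrArg Prod.fst (huniq (w, _) ⟨hw, rfl⟩)⟩
  · rintro ⟨u, hu, huniq⟩
    refine ⟨(u, x), ⟨hu, rfl⟩, ?_⟩
    rintro ⟨w, _⟩ ⟨hw, rfl⟩
    rw [huniq w hw]

namespace IsOutTree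

theorem notMem_root (hT : IsOutTree A r T) : (u, r) ∉ T :=
  dInDeg_eq_zero_iff.1 hT.2.1 u

theorem exists_mem_of_ne_root (hT : IsOutTree A r T) (hx : x ∈ dverts r T) (hxr : x ≠ r) :
    ∃ u, (u, x) ∈ T :=
  (dInDeg_eq_one_iff.1 (hT.2.2.1 x hx hxr)).exists

theorem fst_eq (hT : IsOutTree A r T) (ha : (a, x) ∈ T) (hb : (b, x) ∈ T) : a = b := by
  have hxr : x ≠ r := by
    rintro rfl
    exact hT.notMem_root ha
  exact (dInDeg_eq_one_iff.1 (hT.2.2.1 x (snd_mem_dverts ha) hxr)).unique ha hb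

theorem mem_of_subset_of_mem_dverts (hT : IsOutTree A r T) (hT' : IsOutTree A r T') (hTT' : T ⊆ T')
    (hu : (u, x) ∈ T') (hx : x ∈ dverts r T) : (u, x) ∈ T := by
  have hxr : x ≠ r := by
    rintro rfl
    exact hT'.notMem_root hu
  obtain ⟨w, hw⟩ := hT.exists_mem_of_ne_root hx hxr
  rwa [hT'.fst_eq hu (hTT' hw)]

end IsOutTree

/-- The arc set obtained from `T` by making `q` the only in-neighbour of `x`: for an out-tree, the
subtree at `x` is detached from its parent and hung below `q`. -/
def reparent (T : Finset (V × V)) (q x : V) : Finset (V × V) :=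
  insert (q, x) {e ∈ T | e.2 ≠ x}

theorem mem_reparent : (a, b) ∈ reparent T q x ↔ a = q ∧ b = x ∨ (a, b) ∈ T ∧ b ≠ x := by
  simp [reparent]

theorem dReach_reparent_of_not_dReach (hy : DReach T r y) (hxy : ¬DReach T x y) :
    DReach (reparent T q x) r y := by
  induction hy with
  | refl => exact .refl
  | tail _ hab ih =>
    have hxa := fun h : DReach T x _ ↦ hxy (h.tail hab)
    refine (ih hxa).tail (mem_reparent.2 (.inr ⟨hab, ?_⟩))
    rintro rfl
    exact hxy .refl

theorem dReach_reparent (hx : DReach (reparent T q x) r x) (hy : DReach T r y) :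
    DReach (reparent T q x) r y := by
  induction hy with
  | refl => exact .refl
  | @tail a b _ hab ih =>
    obtain rfl | hbx := eq_or_ne b x
    · exact hx
    · exact ih.tail (mem_reparent.2 (.inr ⟨hab, hbx⟩))

end Arcs

namespace IsSpanningOutTree

variable {A T : Finset (V × V)} {r p q x : V}

theorem of_dReach (hTA : T ⊆ A) (hroot : ∀ u, (u, r) ∉ T)
    (huniq : ∀ a b x, (a, x) ∈ T → (b, x) ∈ T → a = b) (hreach : ∀ x, DReach T r x) :
    IsSpanningOutTree A r T := by
  have hparent : ∀ x, x ≠ r → ∃ u, (u, x) ∈ T := fun x hxr ↦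
    (hreach x).cases_tail.elim (absurd · hxr) fun ⟨u, _, hu⟩ ↦ ⟨u, hu⟩
  refine ⟨⟨hTA, dInDeg_eq_zero_iff.2 hroot, fun x _ hxr ↦ ?_, fun x _ ↦ hreach x⟩, ?_⟩
  · obtain ⟨u, hu⟩ := hparent x hxr
    exact dInDeg_eq_one_iff.2 ⟨u, hu, fun w hw ↦ huniq w u x hw hu⟩
  · refine Finset.eq_univ_of_forall fun x ↦ ?_
    obtain rfl | hxr := eq_or_ne x r
    · exact Finset.mem_insert_self ..
    · exact snd_mem_dverts (hparent x hxr).choose_spec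

theorem dReach (hT : IsSpanningOutTree A r T) (x : V) : DReach T r x :=
  hT.1.2.2.2 x (hT.2 ▸ Finset.mem_univ x)

theorem mem_dleaves_iff (hT : IsSpanningOutTree A r T) : x ∈ dleaves r T ↔ ∀ y, (x, y) ∉ T := by
  rw [dleaves, Finset.mem_filter, hT.2, dOutDeg_eq_zero_iff]
  exact and_iff_right (Finset.mem_univ x)

theorem reparent_of_not_dReach (hT : IsSpanningOutTree A r T) (hqx : (q, x) ∈ A) (hxr : x ≠ r)
    (hxq : ¬DReach T x q) : IsSpanningOutTree A r (reparent T q x) := by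
  have hx : DReach (reparent T q x) r x :=
    (dReach_reparent_of_not_dReach (hT.dReach q) hxq).tail (mem_reparent.2 (.inl ⟨rfl, rfl⟩))
  refine of_dReach ?_ ?_ ?_ fun y ↦ dReach_reparent hx (hT.dReach y)
  · rintro ⟨a, b⟩ hab
    obtain ⟨rfl, rfl⟩ | ⟨hab, -⟩ := mem_reparent.1 hab
    exacts [hqx, hT.1.1 hab]
  · intro u hu
    obtain ⟨-, rfl⟩ | ⟨hu, -⟩ := mem_reparent.1 hu
    exacts [hxr rfl, hT.1.notMem_root hu]
  · intro a b y ha hb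
    obtain ⟨rfl, rfl⟩ | ⟨ha, hyx⟩ := mem_reparent.1 ha <;>
      obtain ⟨rfl, hy⟩ | ⟨hb, hyx'⟩ := mem_reparent.1 hb
    exacts [rfl, absurd rfl hyx', absurd hy hyx, hT.1.fst_eq ha hb]

theorem mem_dleaves_reparent (hT' : IsSpanningOutTree A r (reparent T q x))
    (hp : ∀ y, (p, y) ∈ T → y = x) (hpq : p ≠ q) : p ∈ dleaves r (reparent T q x) := by
  refine hT'.mem_dleaves_iff.2 fun y hy ↦ ?_
  obtain ⟨hp', -⟩ | ⟨hy, hyx⟩ := mem_reparent.1 hy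
  exacts [hpq hp', hyx (hp y hy)]

theorem card_dleaves_le_card_dleaves_reparent (hT : IsSpanningOutTree A r T)
    (hT' : IsSpanningOutTree A r (reparent T q x)) (hp : ∀ y, (p, y) ∈ T ↔ y = x) (hpq : p ≠ q) :
    (dleaves r T).card ≤ (dleaves r (reparent T q x)).card := by
  have hpT : p ∉ (dleaves r T).erase q := fun h ↦
    hT.mem_dleaves_iff.1 (Finset.mem_of_mem_erase h) x ((hp x).2 rfl)
  have hsub : insert p ((dleaves r T).erase q) ⊆ dleaves r (reparent T q x) := by
    refine Finset.insert_subset (hT'.mem_dleaves_reparent (fun y ↦ (hp y).1) hpq) fun w hw ↦ ?_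
    obtain ⟨hwq, hw⟩ := Finset.mem_erase.1 hw
    refine hT'.mem_dleaves_iff.2 fun y hy ↦ ?_
    obtain ⟨hwq', -⟩ | ⟨hy, -⟩ := mem_reparent.1 hy
    exacts [hwq hwq', hT.mem_dleaves_iff.1 hw y hy]
  calc (dleaves r T).card
      ≤ ((dleaves r T).erase q).card + 1 :=
        Nat.sub_le_iff_le_add.1 Finset.pred_card_le_card_erase
    _ = (insert p ((dleaves r T).erase q)).card := (Finset.card_insert_of_notMem hpT).symm
    _ ≤ (dleaves r (reparent T q x)).card := Finset.card_le_card hsub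

end IsSpanningOutTree

/-- The sequence `v 0, …, v k` is a path that leaves `T` at `v 0` and has no other continuation:
every arc of `A` out of `v i` with `i < k` leads to `v (i + 1)` or back to some `v j` with `j < i`.
The definition does not ask that the arcs `(v i, v (i + 1))` be present in `A`. -/
structure IsForcedPath (A T : Finset (V × V)) (r : V) (k : ℕ) (v : ℕ → V) : Prop where
  injOn : Set.InjOn v (Set.Iic k)
  zero_mem : v 0 ∈ dverts r T
  notMem : ∀ i, 1 ≤ i → i ≤ k → v i ∉ dverts r T
  eq_succ_or_eq : ∀ i < k, ∀ y, (v i, y) ∈ A → y = v (i + 1) ∨ ∃ j < i, y = v j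

namespace IsForcedPath

variable {A T T' : Finset (V × V)} {r q : V} {k n p : ℕ} {v : ℕ → V}
  (hv : IsForcedPath A T r k v) (hT : IsOutTree A r T)
  (hT' : IsSpanningOutTree A r T') (hTT' : T ⊆ T')
  (hn : n ≤ k) (hleaf : v n ∈ dleaves r T')
  (hentry : ∀ i, 1 ≤ i → i ≤ k → ∃ z, 1 ≤ z ∧ z ≤ i ∧
    ∃ q : V, (∀ j ≤ k, q ≠ v j) ∧ (q, v z) ∈ A)

section FirstLeaf

variable (hinternal : ∀ j < n, v j ∉ dleaves r T')

include hv hT hT' hTT' hn hinternal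

theorem mem_iff_eq_succ {j : ℕ} (hj : j < n) (y : V) : (v j, y) ∈ T' ↔ y = v (j + 1) := by
  induction j using Nat.strong_induction_on generalizing y with
  | _ j ih =>
    have hsucc : ∀ y, (v j, y) ∈ T' → y = v (j + 1) := by
      intro y hy
      obtain hyj | ⟨m, hmj, rfl⟩ := hv.eq_succ_or_eq j (by lia) y (hT'.1.1 hy)
      · exact hyj
      -- In `T'` the vertex `v 0` has no parent outside `T`, and `v (i + 1)` has the parent `v i`.
      cases m with
      | zero =>
        have hjT := hT.mem_of_subset_of_mem_dverts hT'.1 hTT' hy hv.zero_mem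
        exact absurd (fst_mem_dverts hjT) (hv.notMem j hmj (by lia))
      | succ i =>
        have hij : v j = v i := hT'.1.fst_eq hy ((ih i (by lia) (by lia) _).2 rfl)
        have : j = i := hv.injOn (Set.mem_Iic.2 (by lia)) (Set.mem_Iic.2 (by lia)) hij
        lia
    refine ⟨hsucc y, ?_⟩
    rintro rfl
    obtain ⟨y, hy⟩ : ∃ y, (v j, y) ∈ T' := by
      simpa only [hT'.mem_dleaves_iff, not_forall, not_not] using hinternal j hj
    rwa [← hsucc y hy]

include hleaf

theorem exists_eq_of_dReach {i : ℕ} (hi : i ≤ n) {y : V} (hy : DReach T' (v i) y) :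
    ∃ m ≤ n, y = v m := by
  induction hy with
  | refl => exact ⟨i, hi, rfl⟩
  | tail _ hab ih =>
    obtain ⟨m, hmn, rfl⟩ := ih
    obtain rfl | hmn := hmn.eq_or_lt
    · exact absurd hab (hT'.mem_dleaves_iff.1 hleaf _)
    · exact ⟨m + 1, hmn, (hv.mem_iff_eq_succ hT hT' hTT' hn hinternal hmn _).1 hab⟩

theorem isSpanningOutTree_reparent (hp : p < n) (hq : ∀ j ≤ k, q ≠ v j)
    (hqA : (q, v (p + 1)) ∈ A) : IsSpanningOutTree A r (reparent T' q (v (p + 1))) := by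
  refine hT'.reparent_of_not_dReach hqA ?_ fun hreach ↦ ?_
  · intro hr
    exact hv.notMem (p + 1) (by lia) (by lia) (hr ▸ Finset.mem_insert_self ..)
  · obtain ⟨m, hmn, hqm⟩ := hv.exists_eq_of_dReach hT hT' hTT' hn hleaf hinternal hp hreach
    exact hq m (hmn.trans hn) hqm

include hentry in
theorem exists_lt_mem_dleaves (hpos : 0 < n) :
    ∃ p < n, ∃ T'', IsSpanningOutTree A r T'' ∧ T ⊆ T'' ∧
      (dleaves r T').card ≤ (dleaves r T'').card ∧ v p ∈ dleaves r T'' := by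
  obtain ⟨z, hz, hzn, q, hq, hqA⟩ := hentry n hpos hn
  obtain ⟨p, rfl⟩ := Nat.exists_eq_add_of_le' hz
  have hpath := hv.mem_iff_eq_succ hT hT' hTT' hn hinternal hzn
  have hpq : v p ≠ q := (hq p (by lia)).symm
  have hT'' := hv.isSpanningOutTree_reparent hT hT' hTT' hn hleaf hinternal hzn hq hqA
  refine ⟨p, hzn, reparent T' q (v (p + 1)), hT'', ?_,
    hT'.card_dleaves_le_card_dleaves_reparent hT'' hpath hpq,
    hT''.mem_dleaves_reparent (fun y ↦ (hpath y).1) hpq⟩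
  rintro ⟨a, b⟩ hab
  refine mem_reparent.2 (.inr ⟨hTT' hab, ?_⟩)
  rintro rfl
  exact hv.notMem (p + 1) hz (by lia) (snd_mem_dverts hab)

end FirstLeaf

include hv hT hT' hTT' hn hleaf hentry in
theorem exists_zero_mem_dleaves :
    ∃ T'', IsSpanningOutTree A r T'' ∧ T ⊆ T'' ∧
      (dleaves r T').card ≤ (dleaves r T'').card ∧ v 0 ∈ dleaves r T'' := by
  induction n using Nat.strong_induction_on generalizing T' with
  | _ n ih =>
    obtain rfl | hpos := n.eq_zero_or_pos
    · exact ⟨T', hT', hTT', le_rfl, hleaf⟩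
    by_cases hinternal : ∀ j < n, v j ∉ dleaves r T'
    · obtain ⟨p, hp, S, hS, hTS, hcard, hleafS⟩ :=
        hv.exists_lt_mem_dleaves hT hT' hTT' hn hleaf hentry hinternal hpos
      obtain ⟨T'', hT'', hTT'', hcard', hzero⟩ := ih p hp hS hTS (by lia) hleafS
      exact ⟨T'', hT'', hTT'', hcard.trans hcard', hzero⟩
    · push Not at hinternal
      obtain ⟨j, hj, hleafj⟩ := hinternal
      exact ih j hj hT' hTT' (by lia) hleafj

end IsForcedPath

theorem stmt14 (A T : Finset (V × V)) (r : V) (k : ℕ) (v : ℕ → V)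
    (hA : DLoopless A) (hT : IsOutTree A r T) (hk : 1 ≤ k)
    (hinj : ∀ i j, i ≤ k → j ≤ k → v i = v j → i = j)
    (hv0T : v 0 ∈ dverts r T) (hv0deg : dOutDeg T (v 0) = 0)
    (hv0G : dOutDeg A (v 0) = 1)
    (hN0 : ∀ y : V, (v 0, y) ∈ A ↔ y = v 1)
    (hNi : ∀ i, 1 ≤ i → i ≤ k - 1 →
      ∀ y : V, ((v i, y) ∈ A ∧ ∀ j < i, y ≠ v j) ↔ y = v (i + 1))
    (hfree : ∀ i, 1 ≤ i → i ≤ k → v i ∉ dverts r T)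
    (hq : ∀ i, 1 ≤ i → i ≤ k → ∃ z, 1 ≤ z ∧ z ≤ i ∧
      ∃ q : V, (∀ j ≤ k, q ≠ v j) ∧ (q, v z) ∈ A) :
    ∀ T' : Finset (V × V), IsSpanningOutTree A r T' → T ⊆ T' →
      ∃ T'' : Finset (V × V), IsSpanningOutTree A r T'' ∧ T ⊆ T'' ∧
        (dleaves r T').card ≤ (dleaves r T'').card ∧
        (v 0 ∈ dleaves r T'' ∨ ∀ i ≤ k, 1 ≤ dOutDeg T'' (v i)) := by
  intro T' hT' hTT'
  have hv : IsForcedPath A T r k v := by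
    refine ⟨fun i hi j hj ↦ hinj i j hi hj, hv0T, hfree, fun i hi y hy ↦ ?_⟩
    obtain rfl | hi0 := i.eq_zero_or_pos
    · exact .inl ((hN0 y).1 hy)
    · by_cases hback : ∃ j < i, y = v j
      · exact .inr hback
      · exact .inl ((hNi i hi0 (by lia) y).1 ⟨hy, fun j hj hyj ↦ hback ⟨j, hj, hyj⟩⟩)
  by_cases hinternal : ∀ i ≤ k, 1 ≤ dOutDeg T' (v i)
  · exact ⟨T', hT', hTT', le_rfl, .inr hinternal⟩
  · push Not at hinternal
    obtain ⟨n, hn, hdeg⟩ := hinternal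
    have hleaf : v n ∈ dleaves r T' :=
      hT'.mem_dleaves_iff.2 (dOutDeg_eq_zero_iff.1 (Nat.lt_one_iff.1 hdeg))
    obtain ⟨T'', hT'', hTT'', hcard, hzero⟩ :=
      hv.exists_zero_mem_dleaves hT hT' hTT' hn hleaf hq
    exact ⟨T'', hT'', hTT'', hcard, .inl hzero⟩
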